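/- arXiv:1701.01835 — 2 statements merged into one kernel-verified Lean document; each statement's English description precedes it below -/
import Mathlib

section
/- Let n ≥ 4 be an integer and let α = α(n) := (−(2n−3)+√(4n²−20n+17))/2. Let ψ̂ : [0,∞) → ℝ be smooth with ψ̂(r) > r for all r ≥ 0, ψ̂''(r) > 0 for r > 0, ψ̂'(0) = 0, satisfying ψ̂''(r)/(1+ψ̂'(r)²) + (n−1)(ψ̂'(r)/r − 1/ψ̂(r)) = 0 on (0,∞), together with lim_{r→∞} (ψ̂(r)−r)/r^α = 2^{(α+1)/2} and lim_{r→∞} (ψ̂'(r)−1)/r^{α−1} = α·2^{(α+1)/2}. For k > 0 define ψ̂_k(r) := k^{1/(1−α)} ψ̂(k^{−1/(1−α)} r). Then for every integer m ≥ 2 there exists a constant C > 0 such that |∂_r^m ψ̂_k(r)| ≤ C·k·r^{α−m} for all k > 0 and all r > 0. -/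
open Real Filter Topology

/-!
Write the equation as `ψ'' = -c (1 + ψ' ^ 2) r⁻¹ ((ψ' - 1) + ψ⁻¹ (ψ - r))`, where `c = n - 1`. In
this form the leading part `ψ ∼ r` has cancelled: if `ψ - r` is of order `α` and `ψ' - 1` of order
`α - 1` at infinity, then the right-hand side is of order `α - 2`. It contains no second derivative,
so control of `j` derivatives of `ψ - r` and `ψ' - 1` gives control of `j` derivatives of `ψ''`, and
one bootstraps. Near `0` continuity of `ψ^(m)` suffices, since `r ^ (α - m)` is bounded below there.
The scaling in `ψ̂_k` turns `r ^ α` into `k r ^ α`, so one constant serves for all `k`.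
-/

open Asymptotics Set

lemma isLittleO_rpow_rpow_atTop {a b : ℝ} (hab : a < b) :
    (fun r : ℝ => r ^ a) =o[atTop] fun r : ℝ => r ^ b := by
  refine (isLittleO_iff_tendsto' ?_).2 ((tendsto_rpow_neg_atTop (sub_pos.2 hab)).congr' ?_)
  · filter_upwards [eventually_gt_atTop 0] with r hr h using absurd h (rpow_pos_of_pos hr b).ne'
  · filter_upwards [eventually_gt_atTop 0] with r hr
    rw [← rpow_sub hr, neg_sub]

lemma isBigO_rpow_rpow_atTop {a b : ℝ} (hab : a ≤ b) :
    (fun r : ℝ => r ^ a) =O[atTop] fun r : ℝ => r ^ b := by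
  rcases hab.eq_or_lt with rfl | hlt
  · exact isBigO_refl _ _
  · exact (isLittleO_rpow_rpow_atTop hlt).isBigO

lemma isBigO_rpow_of_tendsto_div {f : ℝ → ℝ} {a l : ℝ}
    (h : Tendsto (fun r : ℝ => f r / r ^ a) atTop (𝓝 l)) :
    f =O[atTop] fun r : ℝ => r ^ a := by
  refine isBigO_of_div_tendsto_nhds ?_ l h
  filter_upwards [eventually_gt_atTop 0] with r hr h0 using absurd h0 (rpow_pos_of_pos hr a).ne'

lemma eventually_ne_zero_of_rpow_isBigO {E : Type*} [NormedAddCommGroup E] {f : ℝ → E} {a : ℝ}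
    (h : (fun r : ℝ => r ^ a) =O[atTop] f) : ∀ᶠ r in atTop, f r ≠ 0 := by
  filter_upwards [h.eq_zero_imp, eventually_gt_atTop 0] with r himp hr h0
  exact (rpow_pos_of_pos hr a).ne' (himp h0)

lemma isEquivalent_id_of_sub_isBigO_rpow {f : ℝ → ℝ} {a : ℝ} (ha : a < 1)
    (h : (fun r => f r - r) =O[atTop] fun r : ℝ => r ^ a) : IsEquivalent atTop f fun r => r :=
  h.trans_isLittleO <| by
    simpa only [rpow_one] using isLittleO_rpow_rpow_atTop ha

lemma isBigO_rpow_principal_Ioi {E : Type*} [SeminormedAddGroup E] {f : ℝ → E} {a : ℝ}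
    (hf : ContinuousOn f (Ici 0)) (ha : a ≤ 0) (h : f =O[atTop] fun r : ℝ => r ^ a) :
    f =O[𝓟 (Ioi 0)] fun r : ℝ => r ^ a := by
  obtain ⟨C, hC⟩ := h.bound
  obtain ⟨R, hR⟩ := eventually_atTop.1 hC
  have near : f =O[𝓟 (Ioc 0 R)] fun r : ℝ => r ^ a := by
    obtain ⟨M, hM⟩ := isCompact_Icc.exists_bound_of_continuousOn (hf.mono Icc_subset_Ici_self)
    refine isBigO_principal.2 ⟨M / R ^ a, fun r hr => ?_⟩
    have hR0 : 0 < R ^ a := rpow_pos_of_pos (hr.1.trans_le hr.2) a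
    have hM0 : 0 ≤ M := (norm_nonneg _).trans (hM r (Ioc_subset_Icc_self hr))
    calc ‖f r‖ ≤ M := hM r (Ioc_subset_Icc_self hr)
      _ = M / R ^ a * R ^ a := (div_mul_cancel₀ M hR0.ne').symm
      _ ≤ M / R ^ a * ‖r ^ a‖ := by
        gcongr
        exact (rpow_le_rpow_of_nonpos hr.1 hr.2 ha).trans (le_norm_self _)
  have far : f =O[𝓟 (Ici R)] fun r : ℝ => r ^ a := isBigO_principal.2 ⟨C, hR⟩
  refine (near.sup far).mono ?_
  rw [sup_principal, principal_mono]
  exact fun r hr => (le_total r R).imp (fun h => ⟨hr, h⟩) id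

lemma eventually_eventuallyEq_nhds_atTop {X Y : Type*} [LinearOrder X] [Nonempty X]
    [NoMaxOrder X] [TopologicalSpace X] [OrderTopology X] {f g : X → Y} (h : f =ᶠ[atTop] g) :
    ∀ᶠ x in atTop, f =ᶠ[𝓝 x] g := by
  obtain ⟨x₀, hx₀⟩ := eventually_atTop.1 h
  filter_upwards [eventually_gt_atTop x₀] with x hx
  filter_upwards [Ioi_mem_nhds hx] with y hy using hx₀ y (le_of_lt hy)

/-- `f` is a symbol of order `a` at infinity, up to `N` derivatives: `f` is `N` times differentiable
near infinity and its `j`-th derivative is `O(r ^ (a - j))` for every `j ≤ N`. -/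
def IsSymbol {E : Type*} [NormedAddCommGroup E] [NormedSpace ℝ E] : ℕ → ℝ → (ℝ → E) → Prop
  | 0, a, f => f =O[atTop] fun r : ℝ => r ^ a
  | N + 1, a, f => (f =O[atTop] fun r : ℝ => r ^ a) ∧ (∀ᶠ r in atTop, DifferentiableAt ℝ f r) ∧
      IsSymbol N (a - 1) (deriv f)

namespace IsSymbol

variable {E : Type*} [NormedAddCommGroup E] [NormedSpace ℝ E] {N : ℕ} {a b c : ℝ} {f g : ℝ → E}

lemma isBigO (h : IsSymbol N a f) : f =O[atTop] fun r : ℝ => r ^ a := by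
  cases N with
  | zero => exact h
  | succ N => exact h.1

lemma congr (h : IsSymbol N a f) (hfg : f =ᶠ[atTop] g) : IsSymbol N a g := by
  induction N generalizing a f g with
  | zero => exact h.congr' hfg .rfl
  | succ N ih =>
    obtain ⟨h0, hd, hN⟩ := h
    have hnhds := eventually_eventuallyEq_nhds_atTop hfg
    refine ⟨h0.congr' hfg .rfl, ?_, ih hN ?_⟩
    · filter_upwards [hd, hnhds] with r hr he using he.differentiableAt_iff.1 hr
    · filter_upwards [hnhds] with r he using he.deriv_eq

lemma succ_of_hasDerivAt {f' : ℝ → E} (h : f =O[atTop] fun r : ℝ => r ^ a)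
    (hf : ∀ᶠ r in atTop, HasDerivAt f (f' r) r) (hf' : IsSymbol N (a - 1) f') :
    IsSymbol (N + 1) a f :=
  ⟨h, hf.mono fun _ hr => hr.differentiableAt, hf'.congr (hf.mono fun _ hr => hr.deriv.symm)⟩

lemma hasDerivAt (h : IsSymbol (N + 1) a f) : ∀ᶠ r in atTop, HasDerivAt f (deriv f r) r :=
  h.2.1.mono fun _ hr => hr.hasDerivAt

lemma deriv_of_succ (h : IsSymbol (N + 1) a f) : IsSymbol N (a - 1) (deriv f) :=
  h.2.2

lemma of_succ (h : IsSymbol (N + 1) a f) : IsSymbol N a f := by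
  induction N generalizing a f with
  | zero => exact h.isBigO
  | succ N ih => exact ⟨h.isBigO, h.2.1, ih h.deriv_of_succ⟩

lemma iteratedDeriv_isBigO (h : IsSymbol N a f) :
    iteratedDeriv N f =O[atTop] fun r : ℝ => r ^ (a - N) := by
  induction N generalizing a f with
  | zero => simpa using h.isBigO
  | succ N ih =>
    rw [iteratedDeriv_succ', Nat.cast_add_one, add_comm, ← sub_sub]
    exact ih h.deriv_of_succ

lemma mono (h : IsSymbol N a f) (hab : a ≤ b) : IsSymbol N b f := by
  induction N generalizing a b f with
  | zero => exact h.isBigO.trans (isBigO_rpow_rpow_atTop hab)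
  | succ N ih =>
    exact ⟨h.isBigO.trans (isBigO_rpow_rpow_atTop hab), h.2.1, ih h.deriv_of_succ (by gcongr)⟩

lemma add (hf : IsSymbol N a f) (hg : IsSymbol N a g) : IsSymbol N a (f + g) := by
  induction N generalizing a f g with
  | zero => exact hf.isBigO.add hg.isBigO
  | succ N ih =>
    refine succ_of_hasDerivAt (hf.isBigO.add hg.isBigO) ?_ (ih hf.deriv_of_succ hg.deriv_of_succ)
    filter_upwards [hf.hasDerivAt, hg.hasDerivAt] with r hfr hgr using hfr.add hgr

lemma mul {A : Type*} [NormedRing A] [NormedAlgebra ℝ A] {f g : ℝ → A} (hf : IsSymbol N a f)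
    (hg : IsSymbol N b g) (habc : a + b ≤ c) : IsSymbol N c (f * g) := by
  induction N generalizing a b c f g with
  | zero => exact hf.isBigO.mul_atTop_rpow_of_isBigO_rpow a b c hg.isBigO habc
  | succ N ih =>
    refine succ_of_hasDerivAt (f' := deriv f * g + f * deriv g)
      (hf.isBigO.mul_atTop_rpow_of_isBigO_rpow a b c hg.isBigO habc) ?_
      ((ih hf.deriv_of_succ hg.of_succ (by linarith)).add
        (ih hf.of_succ hg.deriv_of_succ (by linarith)))
    filter_upwards [hf.hasDerivAt, hg.hasDerivAt] with r hfr hgr using hfr.mul hgr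

lemma zero : IsSymbol N a (0 : ℝ → E) := by
  induction N generalizing a with
  | zero => exact isBigO_zero _ _
  | succ N ih =>
    exact succ_of_hasDerivAt (isBigO_zero _ _) (.of_forall fun r => hasDerivAt_const r 0) ih

lemma const (e : E) : IsSymbol N 0 (fun _ => e) := by
  have h0 : (fun _ : ℝ => e) =O[atTop] fun r : ℝ => r ^ (0 : ℝ) := by
    simpa only [rpow_zero] using isBigO_const_const e one_ne_zero atTop
  cases N with
  | zero => exact h0
  | succ N => exact succ_of_hasDerivAt h0 (.of_forall fun r => hasDerivAt_const r e) zero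

lemma id : IsSymbol N 1 (fun r : ℝ => r) := by
  have h0 : (fun r : ℝ => r) =O[atTop] fun r : ℝ => r ^ (1 : ℝ) := by
    simpa only [rpow_one] using isBigO_refl _ _
  cases N with
  | zero => exact h0
  | succ N =>
    refine succ_of_hasDerivAt h0 (.of_forall hasDerivAt_id) ?_
    simpa only [sub_self] using const 1

lemma inv {f : ℝ → ℝ} (hf : IsSymbol N a f) (hlow : (fun r : ℝ => r ^ a) =O[atTop] f) :
    IsSymbol N (-a) f⁻¹ := by
  have h0 : f⁻¹ =O[atTop] fun r : ℝ => r ^ (-a) := by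
    refine (hlow.inv_rev ?_).congr' .rfl ?_
    · filter_upwards [eventually_gt_atTop 0] with r hr h using absurd h (rpow_pos_of_pos hr a).ne'
    · filter_upwards [eventually_ge_atTop 0] with r hr using (rpow_neg hr a).symm
  induction N with
  | zero => exact h0
  | succ N ih =>
    have hinv := ih hf.of_succ
    refine succ_of_hasDerivAt (f' := (fun _ => -1) * (deriv f * (f⁻¹ * f⁻¹))) h0 ?_ ?_
    · filter_upwards [hf.hasDerivAt, eventually_ne_zero_of_rpow_isBigO hlow] with r hfr hr
      refine (hfr.inv hr).congr_deriv ?_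
      simp only [Pi.mul_apply, Pi.inv_apply]
      field_simp
    · exact (const (-1)).mul (hf.deriv_of_succ.mul (hinv.mul hinv le_rfl) le_rfl) (by linarith)

end IsSymbol

/-- The profile equation of an `O(n) × O(n)`-symmetric minimal hypersurface of `ℝ ^ (2 * n)`, at the
radius `r`. The parameter `c` stands for `n - 1`. -/
def SatisfiesMinimalODE (c : ℝ) (ψ : ℝ → ℝ) (r : ℝ) : Prop :=
  deriv (deriv ψ) r / (1 + deriv ψ r ^ 2) + c * (deriv ψ r / r - 1 / ψ r) = 0

section Profile

variable {α c k r : ℝ} {m N : ℕ} {ψ : ℝ → ℝ}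

lemma SatisfiesMinimalODE.deriv_deriv_eq (h : SatisfiesMinimalODE c ψ r) (hr : r ≠ 0)
    (hψr : ψ r ≠ 0) :
    deriv (deriv ψ) r =
      -c * ((1 + deriv ψ r * deriv ψ r) * (r⁻¹ * ((deriv ψ r - 1) + (ψ r)⁻¹ * (ψ r - r)))) := by
  have hpos : 1 + deriv ψ r ^ 2 ≠ 0 := by positivity
  calc deriv (deriv ψ) r
      = -(c * (deriv ψ r / r - 1 / ψ r)) * (1 + deriv ψ r ^ 2) :=
        (div_eq_iff hpos).1 (eq_neg_of_add_eq_zero_left h)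
    _ = _ := by
      field_simp
      ring

lemma isSymbol_deriv_deriv_of_ode (hα : α < 1)
    (hODE : ∀ᶠ r in atTop, SatisfiesMinimalODE c ψ r)
    (h0 : IsSymbol N α fun r => ψ r - r) (h1 : IsSymbol N (α - 1) fun r => deriv ψ r - 1) :
    IsSymbol N (α - 1 - 1) (deriv (deriv ψ)) := by
  have hlow : (fun r : ℝ => r ^ (1 : ℝ)) =O[atTop] ψ := by
    simpa only [rpow_one] using (isEquivalent_id_of_sub_isBigO_rpow hα h0.isBigO).isBigO_symm
  have hψ : IsSymbol N 1 ψ :=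
    ((h0.mono hα.le).add .id).congr (.of_forall fun r => sub_add_cancel _ r)
  have hψ' : IsSymbol N 0 (deriv ψ) :=
    ((h1.mono (by linarith)).add (.const 1)).congr (.of_forall fun r => sub_add_cancel _ 1)
  have hψinv : IsSymbol N (-1) ψ⁻¹ := hψ.inv hlow
  have hrinv : IsSymbol N (-1) (fun r : ℝ => r)⁻¹ :=
    IsSymbol.id.inv (by simpa only [rpow_one] using isBigO_refl _ _)
  have hbracket : IsSymbol N (α - 1) ((fun r => deriv ψ r - 1) + ψ⁻¹ * fun r => ψ r - r) :=
    h1.add (hψinv.mul h0 (by linarith))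
  have hspeed : IsSymbol N 0 ((fun _ => 1) + deriv ψ * deriv ψ) :=
    (IsSymbol.const 1).add (hψ'.mul hψ' (by linarith))
  refine ((IsSymbol.const (-c)).mul (hspeed.mul (hrinv.mul hbracket le_rfl) le_rfl)
    (by linarith)).congr ?_
  filter_upwards [hODE, eventually_ne_atTop 0, eventually_ne_zero_of_rpow_isBigO hlow]
    with r hr hr0 hψr
  exact (hr.deriv_deriv_eq hr0 hψr).symm

lemma isSymbol_sub_id_and_deriv_sub_one (hα : α < 1) (hψ : ∀ᶠ r in atTop, DifferentiableAt ℝ ψ r)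
    (hψ' : ∀ᶠ r in atTop, DifferentiableAt ℝ (deriv ψ) r)
    (hODE : ∀ᶠ r in atTop, SatisfiesMinimalODE c ψ r)
    (h0 : (fun r => ψ r - r) =O[atTop] fun r : ℝ => r ^ α)
    (h1 : (fun r => deriv ψ r - 1) =O[atTop] fun r : ℝ => r ^ (α - 1)) (N : ℕ) :
    IsSymbol N α (fun r => ψ r - r) ∧ IsSymbol N (α - 1) fun r => deriv ψ r - 1 := by
  induction N with
  | zero => exact ⟨h0, h1⟩
  | succ N ih =>
    refine ⟨.succ_of_hasDerivAt h0 ?_ ih.2,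
      .succ_of_hasDerivAt h1 ?_ (isSymbol_deriv_deriv_of_ode hα hODE ih.1 ih.2)⟩
    · filter_upwards [hψ] with r hr using hr.hasDerivAt.sub (hasDerivAt_id r)
    · filter_upwards [hψ'] with r hr using hr.hasDerivAt.sub_const 1

lemma iteratedDeriv_isBigO_rpow_of_ode (hα : α < 1) (hψ : ∀ᶠ r in atTop, DifferentiableAt ℝ ψ r)
    (hψ' : ∀ᶠ r in atTop, DifferentiableAt ℝ (deriv ψ) r)
    (hODE : ∀ᶠ r in atTop, SatisfiesMinimalODE c ψ r)
    (h0 : (fun r => ψ r - r) =O[atTop] fun r : ℝ => r ^ α)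
    (h1 : (fun r => deriv ψ r - 1) =O[atTop] fun r : ℝ => r ^ (α - 1)) (hm : 2 ≤ m) :
    iteratedDeriv m ψ =O[atTop] fun r : ℝ => r ^ (α - m) := by
  obtain ⟨N, rfl⟩ := Nat.exists_eq_add_of_le' hm
  obtain ⟨hN0, hN1⟩ := isSymbol_sub_id_and_deriv_sub_one hα hψ hψ' hODE h0 h1 N
  rw [iteratedDeriv_succ', iteratedDeriv_succ',
    show α - ((N + 2 : ℕ) : ℝ) = α - 1 - 1 - N by push_cast; ring]
  exact (isSymbol_deriv_deriv_of_ode hα hODE hN0 hN1).iteratedDeriv_isBigO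

/-- The rescaled profile `ψ̂_k`, obtained from `ψ` by the homothety of ratio `k ^ (1 / (1 - α))`. -/
noncomputable def rescaledProfile (α k : ℝ) (ψ : ℝ → ℝ) (r : ℝ) : ℝ :=
  k ^ (1 / (1 - α)) * ψ (k ^ (-(1 / (1 - α))) * r)

lemma iteratedDeriv_rescaledProfile (hψ : ContDiff ℝ m ψ) :
    iteratedDeriv m (rescaledProfile α k ψ) r =
      k ^ (1 / (1 - α)) * ((k ^ (-(1 / (1 - α)))) ^ m *
        iteratedDeriv m ψ (k ^ (-(1 / (1 - α))) * r)) := by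
  unfold rescaledProfile
  rw [iteratedDeriv_const_mul_field, iteratedDeriv_comp_const_mul hψ]

lemma rescale_rpow (hα : α ≠ 1) (hk : 0 < k) (hr : 0 ≤ r) :
    k ^ (1 / (1 - α)) * ((k ^ (-(1 / (1 - α)))) ^ m *
      (k ^ (-(1 / (1 - α))) * r) ^ (α - m)) = k * r ^ (α - m) := by
  have hα' : 1 - α ≠ 0 := sub_ne_zero.2 hα.symm
  have hexp : 1 / (1 - α) + (-(1 / (1 - α)) * m + -(1 / (1 - α)) * (α - m)) = 1 := by
    field_simp
    ring
  rw [mul_rpow (by positivity) hr, ← rpow_mul_natCast hk.le, ← rpow_mul hk.le, ← mul_assoc,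
    ← mul_assoc, mul_assoc (k ^ _), ← rpow_add hk, ← rpow_add hk, hexp, rpow_one]

lemma abs_iteratedDeriv_rescaledProfile_le {C : ℝ} (hα : α ≠ 1) (hψ : ContDiff ℝ m ψ)
    (hC : ∀ r > 0, |iteratedDeriv m ψ r| ≤ C * r ^ (α - m)) (hk : 0 < k) (hr : 0 < r) :
    |iteratedDeriv m (rescaledProfile α k ψ) r| ≤ C * k * r ^ (α - m) := by
  set s := 1 / (1 - α) with hs
  have hks : 0 < k ^ s := rpow_pos_of_pos hk s
  have hks' : 0 < k ^ (-s) := rpow_pos_of_pos hk (-s)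
  calc |iteratedDeriv m (rescaledProfile α k ψ) r|
      = k ^ s * ((k ^ (-s)) ^ m * |iteratedDeriv m ψ (k ^ (-s) * r)|) := by
        rw [iteratedDeriv_rescaledProfile hψ, abs_mul, abs_mul, abs_of_pos hks,
          abs_of_pos (pow_pos hks' m)]
    _ ≤ k ^ s * ((k ^ (-s)) ^ m * (C * (k ^ (-s) * r) ^ (α - m))) := by
        gcongr
        exact hC _ (mul_pos hks' hr)
    _ = C * (k ^ s * ((k ^ (-s)) ^ m * (k ^ (-s) * r) ^ (α - m))) := by ring
    _ = C * k * r ^ (α - m) := by rw [hs, rescale_rpow hα hk hr.le, mul_assoc]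

theorem decay_estimates_psi_hat_general (hα : α < 1) (hm : 2 ≤ m) (hψ : ContDiff ℝ m ψ)
    (hODE : ∀ᶠ r in atTop, SatisfiesMinimalODE c ψ r)
    (h0 : (fun r => ψ r - r) =O[atTop] fun r : ℝ => r ^ α)
    (h1 : (fun r => deriv ψ r - 1) =O[atTop] fun r : ℝ => r ^ (α - 1)) :
    ∃ C > 0, ∀ k > 0, ∀ r > 0,
      |iteratedDeriv m (rescaledProfile α k ψ) r| ≤ C * k * r ^ (α - m) := by
  have hm2 : (2 : ℝ) ≤ m := mod_cast hm
  have hψ2 : ContDiff ℝ 2 ψ := hψ.of_le (mod_cast hm)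
  have hdecay : iteratedDeriv m ψ =O[𝓟 (Ioi 0)] fun r : ℝ => r ^ (α - m) :=
    isBigO_rpow_principal_Ioi (hψ.continuous_iteratedDeriv' m).continuousOn (by linarith)
      (iteratedDeriv_isBigO_rpow_of_ode hα (.of_forall (hψ2.differentiable two_ne_zero))
        (.of_forall hψ2.differentiable_deriv_two) hODE h0 h1 hm)
  obtain ⟨C, hC0, hC⟩ := hdecay.exists_pos
  refine ⟨C, hC0, fun k hk r hr =>
    abs_iteratedDeriv_rescaledProfile_le hα.ne hψ (fun s hs => ?_) hk hr⟩
  simpa only [norm_eq_abs, abs_of_pos (rpow_pos_of_pos hs _)] using isBigOWith_principal.1 hC s hs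

end Profile

lemma indicialRoot_lt_neg_one {x : ℝ} (hx : 4 ≤ x) :
    (-(2 * x - 3) + √(4 * x ^ 2 - 20 * x + 17)) / 2 < -1 := by
  have hsqrt : √(4 * x ^ 2 - 20 * x + 17) < 2 * x - 5 :=
    (sqrt_lt' (by linarith)).2 (by linarith)
  linarith

/-- Decay estimates for higher-order derivatives of the rescaled minimal-surface profile
`ψ̂_k(r) = k^(1/(1−α)) ψ̂(k^(−1/(1−α)) r)`: for every `m ≥ 2` there is `C` with
`|∂_r^m ψ̂_k(r)| ≤ C k r^(α−m)` for all `k > 0` and `r > 0`. -/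
theorem decay_estimates_psi_hat (n : ℕ) (hn : 4 ≤ n)
    (α : ℝ)
    (hα : α = (-(2 * (n : ℝ) - 3) + Real.sqrt (4 * (n : ℝ) ^ 2 - 20 * (n : ℝ) + 17)) / 2)
    (ψ : ℝ → ℝ) (hψ : ContDiff ℝ (⊤ : ℕ∞) ψ)
    (habove : ∀ r : ℝ, 0 ≤ r → r < ψ r)
    (hconv : ∀ r : ℝ, 0 < r → 0 < deriv (deriv ψ) r)
    (hd0 : deriv ψ 0 = 0)
    (hODE : ∀ r : ℝ, 0 < r →
      deriv (deriv ψ) r / (1 + (deriv ψ r) ^ 2) +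
        ((n : ℝ) - 1) * (deriv ψ r / r - 1 / ψ r) = 0)
    (hlim0 : Tendsto (fun r : ℝ => (ψ r - r) / r ^ α) atTop
      (𝓝 ((2 : ℝ) ^ ((α + 1) / 2))))
    (hlim1 : Tendsto (fun r : ℝ => (deriv ψ r - 1) / r ^ (α - 1)) atTop
      (𝓝 (α * (2 : ℝ) ^ ((α + 1) / 2)))) :
    ∀ m : ℕ, 2 ≤ m → ∃ C : ℝ, 0 < C ∧ ∀ k : ℝ, 0 < k → ∀ r : ℝ, 0 < r →
      |iteratedDeriv m (fun x : ℝ => k ^ (1 / (1 - α)) * ψ (k ^ (-(1 / (1 - α))) * x)) r| ≤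
        C * k * r ^ (α - (m : ℝ)) := by
  have hα1 : α < 1 := by linarith [indicialRoot_lt_neg_one (Nat.ofNat_le_cast.2 hn : (4 : ℝ) ≤ n)]
  exact fun m hm => decay_estimates_psi_hat_general hα1 hm (contDiff_infty.1 hψ m)
    ((eventually_gt_atTop 0).mono hODE) (isBigO_rpow_of_tendsto_div hlim0)
    (isBigO_rpow_of_tendsto_div hlim1)
end

section
/- Let n ≥ 4 be an integer. For every smooth compactly supported function v on (0,∞): ∫₀^∞ v'(y)² y^{2(n−1)} e^{−y²/4} dy − 2(n−1) ∫₀^∞ (v(y)/y)² y^{2(n−1)} e^{−y²/4} dy − (1/2) ∫₀^∞ v(y)² y^{2(n−1)} e^{−y²/4} dy ≥ ((4n²−20n+17)/(2n−3)²) ∫₀^∞ v'(y)² y^{2(n−1)} e^{−y²/4} dy − ((6n−7)/(2(2n−3))) ∫₀^∞ v(y)² y^{2(n−1)} e^{−y²/4} dy. -/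
open Real Filter Topology

/-!
Writing `‖·‖` for the weighted norm, the estimate is the Hardy inequality
`‖v / y‖² ≤ (4 / m ^ 2) * ‖v'‖² + (1 / m) * ‖v‖²`, `m = 2 * n - 3`, multiplied by `2 * (n - 1)`.
For a weight `y ^ k * w y` the Hardy inequality comes from expanding
`0 ≤ ∫ ((2 / (k + 1)) y v' + v) ^ 2 * y ^ k * w` and removing the cross term with
`(v ^ 2 * y ^ (k + 1) * w)'`, whose integral vanishes; for the Gaussian `w' = -(y / 2) * w`.
-/

section Hardy

open MeasureTheory Set

variable {v : ℝ → ℝ}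

theorem integrableOn_sq_mul_of_hasCompactSupport {f g : ℝ → ℝ} (hf : Continuous f)
    (hfc : HasCompactSupport f) (hg : Continuous g) (s : Set ℝ) :
    IntegrableOn (fun y => f y ^ 2 * g y) s :=
  ((hf.pow 2).mul hg |>.integrable_of_hasCompactSupport
    (hfc.mono fun y hy hfy => hy (by simp [hfy]))).integrableOn

theorem integrableOn_mul_deriv_mul_of_hasCompactSupport {g : ℝ → ℝ} (hv : ContDiff ℝ 1 v)
    (hvc : HasCompactSupport v) (hg : Continuous g) (s : Set ℝ) :
    IntegrableOn (fun y => v y * deriv v y * g y) s :=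
  ((hv.continuous.mul (hv.continuous_deriv le_rfl)).mul hg |>.integrable_of_hasCompactSupport
    hvc.mul_right.mul_right).integrableOn

theorem integral_Ioi_sq_mul_deriv {g : ℝ → ℝ} (hv : ContDiff ℝ 1 v) (hvc : HasCompactSupport v)
    (hg : ContDiff ℝ 1 g) (a : ℝ) :
    ∫ y in Ioi a, v y ^ 2 * deriv g y =
      -(v a ^ 2 * g a) - 2 * ∫ y in Ioi a, v y * deriv v y * g y := by
  let F : ℝ → ℝ := fun y => v y ^ 2 * g y
  have deriv_F (y : ℝ) : deriv F y = v y ^ 2 * deriv g y + 2 * (v y * deriv v y * g y) := by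
    have hv' := (hv.differentiable one_ne_zero y).hasDerivAt
    have hg' := (hg.differentiable one_ne_zero y).hasDerivAt
    refine ((hv'.fun_pow 2).fun_mul hg').deriv.trans ?_
    push_cast
    ring
  have hFc : HasCompactSupport F := hvc.mono fun y hy hvy => hy (by simp [F, hvy])
  have integral_deriv_F : ∫ y in Ioi a, deriv F y = -F a :=
    hFc.integral_Ioi_deriv_eq ((hv.pow 2).mul hg) a
  simp only [deriv_F] at integral_deriv_F
  rw [integral_add
      (integrableOn_sq_mul_of_hasCompactSupport hv.continuous hvc (hg.continuous_deriv le_rfl) _)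
      ((integrableOn_mul_deriv_mul_of_hasCompactSupport hv hvc hg.continuous _).const_mul 2),
    integral_const_mul] at integral_deriv_F
  linarith

theorem integral_Ioi_sq_mul_pow_mul {w : ℝ → ℝ} (hv : ContDiff ℝ 1 v) (hvc : HasCompactSupport v)
    (hw : ContDiff ℝ 1 w) (k : ℕ) :
    ∫ y in Ioi (0 : ℝ), v y ^ 2 * (y ^ k * w y) =
      (-(∫ y in Ioi (0 : ℝ), v y ^ 2 * (y ^ (k + 1) * deriv w y)) -
        2 * ∫ y in Ioi (0 : ℝ), v y * deriv v y * (y ^ (k + 1) * w y)) / (k + 1) := by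
  have hwc := hw.continuous
  have deriv_weight (y : ℝ) : deriv (fun y => y ^ (k + 1) * w y) y =
      (k + 1) * (y ^ k * w y) + y ^ (k + 1) * deriv w y := by
    have hw' := (hw.differentiable one_ne_zero y).hasDerivAt
    refine ((hasDerivAt_pow (k + 1) y).fun_mul hw').deriv.trans ?_
    rw [Nat.add_sub_cancel]
    push_cast
    ring
  have by_parts := integral_Ioi_sq_mul_deriv (g := fun y => y ^ (k + 1) * w y) hv hvc
    (by fun_prop) 0
  simp only [deriv_weight, mul_add, mul_left_comm _ ((k : ℝ) + 1)] at by_parts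
  rw [integral_add
      ((integrableOn_sq_mul_of_hasCompactSupport hv.continuous hvc (by fun_prop) _).const_mul _)
      (integrableOn_sq_mul_of_hasCompactSupport hv.continuous hvc
        ((continuous_pow _).fun_mul (hw.continuous_deriv le_rfl)) _),
    integral_const_mul, zero_pow k.succ_ne_zero, zero_mul, mul_zero] at by_parts
  rw [eq_div_iff k.cast_add_one_ne_zero]
  linarith

theorem hardy_inequality_pow_mul {w : ℝ → ℝ} (hv : ContDiff ℝ 1 v) (hvc : HasCompactSupport v)
    (hw : ContDiff ℝ 1 w) (hw_nonneg : ∀ y, 0 < y → 0 ≤ w y) (k : ℕ) :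
    ∫ y in Ioi (0 : ℝ), v y ^ 2 * (y ^ k * w y) ≤
      4 / (k + 1) ^ 2 * (∫ y in Ioi (0 : ℝ), deriv v y ^ 2 * (y ^ (k + 2) * w y)) -
        2 / (k + 1) * ∫ y in Ioi (0 : ℝ), v y ^ 2 * (y ^ (k + 1) * deriv w y) := by
  have hwc := hw.continuous
  have square_nonneg : 0 ≤ ∫ y in Ioi (0 : ℝ),
      (4 / ((k : ℝ) + 1) ^ 2 * (deriv v y ^ 2 * (y ^ (k + 2) * w y)) +
        4 / ((k : ℝ) + 1) * (v y * deriv v y * (y ^ (k + 1) * w y)) +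
          v y ^ 2 * (y ^ k * w y)) := by
    refine setIntegral_nonneg measurableSet_Ioi fun y (hy : 0 < y) => ?_
    have hwy := hw_nonneg y hy
    calc 0 ≤ (2 / (k + 1) * y * deriv v y + v y) ^ 2 * (y ^ k * w y) := by positivity
      _ = _ := by field_simp; ring
  have int_deriv_sq := (integrableOn_sq_mul_of_hasCompactSupport (hv.continuous_deriv le_rfl)
    hvc.deriv (g := fun y => y ^ (k + 2) * w y) (by fun_prop) (Ioi 0)).const_mul
      (4 / ((k : ℝ) + 1) ^ 2)
  have int_cross := (integrableOn_mul_deriv_mul_of_hasCompactSupport hv hvc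
    (g := fun y => y ^ (k + 1) * w y) (by fun_prop) (Ioi 0)).const_mul (4 / ((k : ℝ) + 1))
  have int_sq := integrableOn_sq_mul_of_hasCompactSupport hv.continuous hvc
    (g := fun y => y ^ k * w y) (by fun_prop) (Ioi 0)
  rw [integral_add (int_deriv_sq.fun_add int_cross) int_sq, integral_add int_deriv_sq int_cross,
    integral_const_mul, integral_const_mul] at square_nonneg
  linear_combination square_nonneg + 2 * integral_Ioi_sq_mul_pow_mul hv hvc hw k

end Hardy

/-- The squared norm of `f` in the `L²` space on `(0,∞)` with weight `y ^ k * exp (-y ^ 2 / 4)`;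
the norm of the coercivity estimate has `k = 2 * (n - 1)`. It is `0` if the integral diverges. -/
noncomputable def gaussianNormSq (k : ℕ) (f : ℝ → ℝ) : ℝ :=
  ∫ y in Set.Ioi (0 : ℝ), f y ^ 2 * y ^ k * exp (-y ^ 2 / 4)

theorem gaussianNormSq_div_id (k : ℕ) (f : ℝ → ℝ) :
    gaussianNormSq (k + 2) (fun y => f y / y) = gaussianNormSq k f := by
  refine MeasureTheory.setIntegral_congr_fun measurableSet_Ioi fun y (hy : 0 < y) => ?_
  field_simp
  ring

theorem deriv_exp_neg_sq_div_four (y : ℝ) :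
    deriv (fun y => exp (-y ^ 2 / 4)) y = -(1 / 2) * (y * exp (-y ^ 2 / 4)) := by
  refine ((hasDerivAt_pow 2 y).fun_neg.div_const 4).exp.deriv.trans ?_
  push_cast
  ring

theorem gaussianNormSq_hardy {v : ℝ → ℝ} (hv : ContDiff ℝ 1 v) (hvc : HasCompactSupport v)
    (k : ℕ) :
    gaussianNormSq (k + 2) (fun y => v y / y) ≤
      4 / (k + 1) ^ 2 * gaussianNormSq (k + 2) (deriv v) +
        1 / (k + 1) * gaussianNormSq (k + 2) v := by
  have hardy := hardy_inequality_pow_mul (w := fun y => exp (-y ^ 2 / 4)) hv hvc (by fun_prop)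
    (fun y _ => (exp_pos _).le) k
  have integral_deriv_weight :
      ∫ y in Set.Ioi (0 : ℝ), v y ^ 2 * (y ^ (k + 1) * deriv (fun y => exp (-y ^ 2 / 4)) y) =
        -(1 / 2) * gaussianNormSq (k + 2) v := by
    rw [gaussianNormSq, ← MeasureTheory.integral_const_mul]
    congr 1 with y
    rw [deriv_exp_neg_sq_div_four]
    ring
  rw [integral_deriv_weight] at hardy
  rw [gaussianNormSq_div_id]
  simp only [gaussianNormSq, mul_assoc] at hardy ⊢
  refine hardy.trans_eq ?_
  ring

theorem coercivity_estimate_general (n : ℕ) (hn : 2 ≤ n) {v : ℝ → ℝ} (hv : ContDiff ℝ 1 v)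
    (hcpt : HasCompactSupport v) :
    (4 * (n : ℝ) ^ 2 - 20 * n + 17) / (2 * n - 3) ^ 2 * gaussianNormSq (2 * (n - 1)) (deriv v) -
        (6 * (n : ℝ) - 7) / (2 * (2 * n - 3)) * gaussianNormSq (2 * (n - 1)) v ≤
      gaussianNormSq (2 * (n - 1)) (deriv v) -
        2 * ((n : ℝ) - 1) * gaussianNormSq (2 * (n - 1)) (fun y => v y / y) -
          1 / 2 * gaussianNormSq (2 * (n - 1)) v := by
  obtain ⟨p, rfl⟩ := Nat.exists_eq_add_of_le' hn
  have hardy := mul_le_mul_of_nonneg_left (gaussianNormSq_hardy hv hcpt (2 * p))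
    (show (0 : ℝ) ≤ 2 * (p + 1) by positivity)
  have coeff_deriv : (4 * ((p : ℝ) + 2) ^ 2 - 20 * (p + 2) + 17) / (2 * p + 1) ^ 2 =
      1 - 2 * (p + 1) * (4 / (2 * p + 1) ^ 2) := by
    field_simp
    ring
  have coeff_self : (6 * ((p : ℝ) + 2) - 7) / (2 * (2 * p + 1)) =
      1 / 2 + 2 * (p + 1) * (1 / (2 * p + 1)) := by
    field_simp
    ring
  rw [show 2 * (p + 2 - 1) = 2 * p + 2 by lia]
  push_cast at hardy ⊢
  rw [show 2 * ((p : ℝ) + 2) - 3 = 2 * p + 1 by ring, coeff_deriv, coeff_self]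
  linarith

/-- Coercivity estimate for the linearized operator: for smooth compactly supported `v` on
`(0,∞)`, `‖v'‖² − 2(n−1)‖v/y‖² − (1/2)‖v‖² ≥ ((4n²−20n+17)/(2n−3)²)‖v'‖² −
((6n−7)/(2(2n−3)))‖v‖²` with weight `y^(2(n−1)) e^(−y²/4)`. -/
theorem coercivity_estimate (n : ℕ) (hn : 4 ≤ n) (v : ℝ → ℝ)
    (hv : ContDiff ℝ (⊤ : ℕ∞) v) (hcpt : HasCompactSupport v)
    (hsupp : tsupport v ⊆ Set.Ioi 0) :
    (4 * (n : ℝ) ^ 2 - 20 * (n : ℝ) + 17) / (2 * (n : ℝ) - 3) ^ 2 *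
        (∫ y in Set.Ioi (0 : ℝ),
          (deriv v y) ^ 2 * y ^ (2 * (n - 1)) * Real.exp (-y ^ 2 / 4)) -
      (6 * (n : ℝ) - 7) / (2 * (2 * (n : ℝ) - 3)) *
        (∫ y in Set.Ioi (0 : ℝ),
          (v y) ^ 2 * y ^ (2 * (n - 1)) * Real.exp (-y ^ 2 / 4)) ≤
    (∫ y in Set.Ioi (0 : ℝ),
        (deriv v y) ^ 2 * y ^ (2 * (n - 1)) * Real.exp (-y ^ 2 / 4)) -
      2 * ((n : ℝ) - 1) *
        (∫ y in Set.Ioi (0 : ℝ),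
          (v y / y) ^ 2 * y ^ (2 * (n - 1)) * Real.exp (-y ^ 2 / 4)) -
      1 / 2 *
        (∫ y in Set.Ioi (0 : ℝ),
          (v y) ^ 2 * y ^ (2 * (n - 1)) * Real.exp (-y ^ 2 / 4)) :=
  coercivity_estimate_general n (by lia) (hv.of_le (by exact_mod_cast le_top)) hcpt
end
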